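/- The infinite series identity 2π/√3 = Σ_{k=0}^{∞} (1/4)^k · (1/3)_k / (7/6)_k · (9k + 7) / ((k + 1)(3k + 2)) holds, where the sum is over natural numbers k and all quantities are real numbers. -/

import Mathlib

noncomputable def risingFactorial (a : ℝ) (k : ℕ) : ℝ := ∏ i ∈ Finset.range k, (a + i)

/-!
The series is an accelerated form of the partial fraction expansion of the cotangent. For
`F n k = (a)_{n+k} (1+a-b)_k / ((n+k+b) (a+1)_{n+2k})` there is a companion `G` such that
`F n k - F n (k+1) = G n k - G (n+1) k`. Since `G n k → 0` as `n → ∞`, summing over `n` shows that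
`G 0 k` is the difference of consecutive column sums `∑ₙ F n k`; these decay geometrically in `k`,
so `∑ₖ G 0 k = ∑ₙ F n 0 = ∑ₙ a / ((n+a) (n+b))`. For `b = 1 - a` the right-hand side is
`a π cot(π a) / (1 - 2a)`, and `a = 1/3` gives half of the stated series.
-/

open Filter Topology

section RisingFactorial

lemma risingFactorial_succ (a : ℝ) (k : ℕ) :
    risingFactorial a (k + 1) = risingFactorial a k * (a + k) :=
  Finset.prod_range_succ _ _

lemma risingFactorial_succ' (a : ℝ) (k : ℕ) :
    risingFactorial a (k + 1) = a * risingFactorial (a + 1) k := by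
  simp only [risingFactorial, Finset.prod_range_succ', Nat.cast_zero, add_zero, Nat.cast_succ,
    mul_comm a, add_assoc, add_comm (1 : ℝ)]

lemma risingFactorial_pos {a : ℝ} (ha : 0 < a) (k : ℕ) : 0 < risingFactorial a k :=
  Finset.prod_pos fun _ _ ↦ by positivity

lemma risingFactorial_two_mul (a : ℝ) (k : ℕ) :
    risingFactorial a (2 * k) =
      4 ^ k * risingFactorial (a / 2) k * risingFactorial ((a + 1) / 2) k := by
  induction k with
  | zero => simp [risingFactorial]
  | succ k ih =>
    rw [Nat.mul_succ, risingFactorial_succ, risingFactorial_succ, ih, risingFactorial_succ,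
      risingFactorial_succ]
    push_cast
    ring

end RisingFactorial

lemma tendsto_sum_of_wz_pair {E : Type*} [AddCommGroup E] [TopologicalSpace E]
    [IsTopologicalAddGroup E] [T2Space E] {F G : ℕ → ℕ → E} {S : ℕ → E}
    (hFG : ∀ n k, F n k - F n (k + 1) = G n k - G (n + 1) k)
    (hG : ∀ k, Tendsto (G · k) atTop (𝓝 0)) (hF : ∀ k, HasSum (F · k) (S k))
    (hS : Tendsto S atTop (𝓝 0)) :
    Tendsto (fun K ↦ ∑ k ∈ Finset.range K, G 0 k) atTop (𝓝 (S 0)) := by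
  have hG_eq (k : ℕ) : G 0 k = S k - S (k + 1) := by
    have hsum := ((hF k).sub (hF (k + 1))).tendsto_sum_nat
    simp only [hFG, Finset.sum_range_sub'] at hsum
    exact tendsto_nhds_unique (by simpa using (hG k).const_sub (G 0 k)) hsum
  simp only [hG_eq, Finset.sum_range_sub']
  simpa using hS.const_sub (S 0)

section WZPair

/-- The first member `F` of the Wilf–Zeilberger pair; the column `k = 0` is the series
`∑ₙ a / ((n + a) (n + b))` to be accelerated. -/
noncomputable def wzTerm (a b : ℝ) (n k : ℕ) : ℝ :=
  risingFactorial a (n + k) * risingFactorial (1 + a - b) k /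
    ((n + k + b) * risingFactorial (a + 1) (n + 2 * k))

/-- The second member `G` of the Wilf–Zeilberger pair, given as `wzTerm` times its rational
certificate; the row `n = 0` is the accelerated series. -/
noncomputable def wzCompanion (a b : ℝ) (n k : ℕ) : ℝ :=
  wzTerm a b n k * (1 + (n + k + a) * (n + k + b) / ((k + 1) * (n + 2 * k + a + 1)))

variable {a b : ℝ}

lemma wzTerm_pos (ha : 0 < a) (hb : 0 < b) (hab : b < a + 1) (n k : ℕ) : 0 < wzTerm a b n k := by
  have hF := risingFactorial_pos ha (n + k)
  have hc := risingFactorial_pos (a := 1 + a - b) (by linarith) k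
  have hD := risingFactorial_pos (a := a + 1) (by linarith) (n + 2 * k)
  unfold wzTerm
  positivity

lemma wzCompanion_nonneg (ha : 0 < a) (hb : 0 < b) (hab : b < a + 1) (n k : ℕ) :
    0 ≤ wzCompanion a b n k :=
  mul_nonneg (wzTerm_pos ha hb hab n k).le (by positivity)

lemma wzTerm_zero_right (ha : 0 < a) (n : ℕ) : wzTerm a b n 0 = a / ((n + a) * (n + b)) := by
  have hD : 0 < risingFactorial (a + 1) n := risingFactorial_pos (by linarith) n
  have hratio : risingFactorial a n / risingFactorial (a + 1) n = a / (n + a) := by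
    rw [div_eq_div_iff hD.ne' (by positivity), add_comm (n : ℝ) a, ← risingFactorial_succ,
      risingFactorial_succ']
  calc wzTerm a b n 0 = risingFactorial a n / risingFactorial (a + 1) n / (n + b) := by
        simp [wzTerm, risingFactorial, div_div, mul_comm]
    _ = a / ((n + a) * (n + b)) := by rw [hratio, div_div]

lemma wzTerm_succ_left (ha : 0 < a) (hb : 0 < b) (n k : ℕ) :
    wzTerm a b (n + 1) k = wzTerm a b n k *
      ((n + k + a) * (n + k + b) / ((n + k + b + 1) * (n + 2 * k + a + 1))) := by
  have hD := risingFactorial_pos (a := a + 1) (by linarith) (n + 2 * k)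
  have _ : a + 1 + (n + 2 * k) ≠ 0 := by positivity
  have ht : (n : ℝ) + 1 + k + b ≠ 0 := by positivity
  simp only [wzTerm, Nat.add_right_comm n 1, risingFactorial_succ]
  push_cast
  field_simp
  ring

lemma wzTerm_succ_right (ha : 0 < a) (hb : 0 < b) (n k : ℕ) :
    wzTerm a b n (k + 1) = wzTerm a b n k *
      ((k + (1 + a - b)) * (n + k + a) * (n + k + b) /
        ((n + k + b + 1) * (n + 2 * k + a + 1) * (n + 2 * k + a + 2))) := by
  have hD := risingFactorial_pos (a := a + 1) (by linarith) (n + 2 * k)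
  simp only [wzTerm, Nat.mul_succ, ← add_assoc, risingFactorial_succ]
  push_cast
  have _ : a + 1 + (n + 2 * k) ≠ 0 := by positivity
  have _ : a + 1 + (n + 2 * k + 1) ≠ 0 := by positivity
  have ht : (n : ℝ) + (k + 1) + b ≠ 0 := by positivity
  field_simp
  ring

lemma wzTerm_sub_succ_right (ha : 0 < a) (hb : 0 < b) (n k : ℕ) :
    wzTerm a b n k - wzTerm a b n (k + 1) = wzCompanion a b n k - wzCompanion a b (n + 1) k := by
  simp only [wzCompanion]
  rw [wzTerm_succ_right ha hb, wzTerm_succ_left ha hb]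
  push_cast
  have _ : (n : ℝ) + 1 + 2 * k + a + 1 ≠ 0 := by positivity
  field_simp
  ring

lemma wzTerm_succ_right_le (ha : 0 < a) (hb : 0 < b) (hab : b < a + 1) {r : ℝ} (hr : 1 / 2 ≤ r)
    (hrab : 1 + a - b ≤ r * (a + 1)) (n k : ℕ) :
    wzTerm a b n (k + 1) ≤ r * wzTerm a b n k := by
  rw [wzTerm_succ_right ha hb, mul_comm]
  refine mul_le_mul_of_nonneg_right ?_ (wzTerm_pos ha hb hab n k).le
  have hn : (0 : ℝ) ≤ n := n.cast_nonneg
  have hk : (0 : ℝ) ≤ k := k.cast_nonneg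
  have hc : k + (1 + a - b) ≤ r * (n + 2 * k + a + 1) := by
    nlinarith [mul_nonneg (sub_nonneg.2 hr) hk, mul_nonneg (sub_nonneg.2 hr) hn]
  rw [div_le_iff₀ (by positivity)]
  calc (k + (1 + a - b)) * (n + k + a) * (n + k + b)
      ≤ r * (n + 2 * k + a + 1) * (n + 2 * k + a + 2) * (n + k + b + 1) := by
        gcongr ?_ * ?_ * ?_ <;> linarith
    _ = r * ((n + k + b + 1) * (n + 2 * k + a + 1) * (n + 2 * k + a + 2)) := by ring

lemma wzTerm_le_pow_mul (ha : 0 < a) (hb : 0 < b) (hab : b < a + 1) {r : ℝ} (hr : 1 / 2 ≤ r)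
    (hrab : 1 + a - b ≤ r * (a + 1)) (n k : ℕ) :
    wzTerm a b n k ≤ r ^ k * wzTerm a b n 0 :=
  le_geom (by linarith) k fun j _ ↦ wzTerm_succ_right_le ha hb hab hr hrab n j

lemma wzTerm_le_wzTerm_zero (ha : 0 < a) (hb : 0 < b) (hab : b < a + 1) (n k : ℕ) :
    wzTerm a b n k ≤ wzTerm a b n 0 := by
  simpa using wzTerm_le_pow_mul ha hb hab (r := 1) (by norm_num) (by linarith) n k

lemma summable_wzTerm (ha : 0 < a) (hb : 0 < b) (hab : b < a + 1)
    (hsum : Summable (wzTerm a b · 0)) (k : ℕ) : Summable (wzTerm a b · k) :=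
  hsum.of_nonneg_of_le (wzTerm_pos ha hb hab · k |>.le) (wzTerm_le_wzTerm_zero ha hb hab · k)

lemma wzCompanion_le (ha : 0 < a) (hb : 0 < b) (hab : b < a + 1) (n k : ℕ) :
    wzCompanion a b n k ≤ (1 + k) * wzTerm a b n 0 + a / (n + a) := by
  have hcert : (n + k + a) * (n + k + b) / ((k + 1) * (n + 2 * k + a + 1)) ≤ n + k + b := by
    rw [mul_div_right_comm]
    refine mul_le_of_le_one_left (by positivity) ((div_le_one (by positivity)).2 ?_)
    nlinarith [n.cast_nonneg (α := ℝ), k.cast_nonneg (α := ℝ)]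
  calc wzCompanion a b n k ≤ wzTerm a b n 0 * (1 + (n + k + b)) := by
        unfold wzCompanion
        have := (wzTerm_pos ha hb hab n 0).le
        gcongr
        exact wzTerm_le_wzTerm_zero ha hb hab n k
    _ = (1 + k) * wzTerm a b n 0 + a / (n + a) := by
        rw [wzTerm_zero_right ha]
        field_simp
        ring

lemma tendsto_wzCompanion_atTop (ha : 0 < a) (hb : 0 < b) (hab : b < a + 1)
    (hsum : Summable (wzTerm a b · 0)) (k : ℕ) :
    Tendsto (wzCompanion a b · k) atTop (𝓝 0) := by
  have hdiv : Tendsto (fun n : ℕ ↦ a / (n + a)) atTop (𝓝 0) :=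
    (tendsto_natCast_atTop_atTop.atTop_add tendsto_const_nhds).const_div_atTop a
  refine squeeze_zero (wzCompanion_nonneg ha hb hab · k) (wzCompanion_le ha hb hab · k) ?_
  simpa using (hsum.tendsto_atTop_zero.const_mul (1 + k : ℝ)).add hdiv

lemma tendsto_tsum_wzTerm_atTop (ha : 0 < a) (hb : 0 < b) (hab : b < a + 1)
    (hsum : Summable (wzTerm a b · 0)) :
    Tendsto (fun k ↦ ∑' n, wzTerm a b n k) atTop (𝓝 0) := by
  obtain ⟨r, hr, hrab, hr_lt⟩ : ∃ r : ℝ, 1 / 2 ≤ r ∧ 1 + a - b ≤ r * (a + 1) ∧ r < 1 :=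
    ⟨max (1 / 2) ((1 + a - b) / (a + 1)), le_max_left _ _,
      (div_le_iff₀ (by positivity)).1 (le_max_right _ _),
      max_lt (by norm_num) ((div_lt_one (by positivity)).2 (by linarith))⟩
  have hle (k : ℕ) : ∑' n, wzTerm a b n k ≤ r ^ k * ∑' n, wzTerm a b n 0 := by
    rw [← tsum_mul_left]
    exact (summable_wzTerm ha hb hab hsum k).tsum_le_tsum
      (wzTerm_le_pow_mul ha hb hab hr hrab · k) (hsum.mul_left _)
  refine squeeze_zero (fun k ↦ tsum_nonneg (wzTerm_pos ha hb hab · k |>.le)) hle ?_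
  simpa using (tendsto_pow_atTop_nhds_zero_of_lt_one (by linarith) hr_lt).mul_const
    (∑' n, wzTerm a b n 0)

theorem hasSum_wzCompanion (ha : 0 < a) (hb : 0 < b) (hab : b < a + 1) {L : ℝ}
    (hL : HasSum (fun n : ℕ ↦ a / ((n + a) * (n + b))) L) :
    HasSum (wzCompanion a b 0) L := by
  simp only [← wzTerm_zero_right ha] at hL
  rw [hasSum_iff_tendsto_nat_of_nonneg (wzCompanion_nonneg ha hb hab 0), ← hL.tsum_eq]
  exact tendsto_sum_of_wz_pair (wzTerm_sub_succ_right ha hb)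
    (tendsto_wzCompanion_atTop ha hb hab hL.summable)
    (summable_wzTerm ha hb hab hL.summable · |>.hasSum)
    (tendsto_tsum_wzTerm_atTop ha hb hab hL.summable)

end WZPair

section Cotangent

open scoped Real

lemma ofReal_mem_integerComplement {x : ℝ} (hx₀ : 0 < x) (hx₁ : x < 1) :
    (x : ℂ) ∈ Complex.integerComplement := by
  rintro ⟨m, hm⟩
  have hmx : (m : ℝ) = x := by exact_mod_cast hm
  have h₀ : 0 < m := by exact_mod_cast hmx ▸ hx₀
  have h₁ : m < 1 := by exact_mod_cast hmx ▸ hx₁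
  omega

lemma tendsto_sum_one_div_add_sub_one_div_add_one_sub {x : ℝ}
    (hx : (x : ℂ) ∈ Complex.integerComplement) :
    Tendsto (fun N ↦ ∑ n ∈ Finset.range N, (1 / (n + x) - 1 / (n + (1 - x)))) atTop
      (𝓝 (π * Real.cot (π * x))) := by
  have hcot : Tendsto (fun N ↦ ∑ n ∈ Finset.range N, (1 / (x - (n + 1)) + 1 / (x + (n + 1)))) atTop
      (𝓝 (π * Real.cot (π * x) - 1 / x)) := by
    rw [← Filter.tendsto_ofReal_iff]
    simpa [cotTerm] using tendsto_logDeriv_euler_cot_sub hx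
  have htail : Tendsto (fun N : ℕ ↦ 1 / (N + x)) atTop (𝓝 0) :=
    (tendsto_natCast_atTop_atTop.atTop_add tendsto_const_nhds).const_div_atTop 1
  have hlim := (hcot.add_const (1 / x)).sub htail
  rw [sub_add_cancel, sub_zero] at hlim
  refine hlim.congr fun N ↦ ?_
  induction N with
  | zero => simp
  | succ N ih =>
    have hneg : x - (N + 1) = -(N + (1 - x)) := by ring
    rw [Finset.sum_range_succ, Finset.sum_range_succ, ← ih, hneg, one_div_neg_eq_neg_one_div]
    push_cast
    ring

lemma hasSum_one_div_mul_one_sub {x : ℝ} (hx₀ : 0 < x) (hx₁ : x < 1) (hx : x ≠ 1 / 2) :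
    HasSum (fun n : ℕ ↦ 1 / ((n + x) * (n + (1 - x)))) (π * Real.cot (π * x) / (1 - 2 * x)) := by
  have _ : 0 < 1 - x := sub_pos.2 hx₁
  have hx' : 1 - 2 * x ≠ 0 := fun h ↦ hx (by linarith)
  rw [hasSum_iff_tendsto_nat_of_nonneg fun n ↦ by positivity]
  have hlim := tendsto_sum_one_div_add_sub_one_div_add_one_sub
    (ofReal_mem_integerComplement hx₀ hx₁)
  refine (hlim.div_const (1 - 2 * x)).congr fun N ↦ ?_
  rw [Finset.sum_div]
  refine Finset.sum_congr rfl fun n _ ↦ ?_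
  have hn : (n : ℝ) + (1 - x) ≠ 0 := by positivity
  have hnum : 1 * (n + (1 - x)) - (n + x) * 1 = 1 - 2 * x := by ring
  rw [div_sub_div _ _ (by positivity) hn, hnum, div_right_comm, div_self hx']

lemma cot_pi_div_three : Real.cot (π / 3) = 1 / √3 := by
  rw [Real.cot_eq_cos_div_sin, Real.cos_pi_div_three, Real.sin_pi_div_three]
  field_simp

lemma hasSum_one_third_div_mul :
    HasSum (fun n : ℕ ↦ (1 / 3 : ℝ) / ((n + 1 / 3) * (n + 2 / 3))) (π / √3) := by
  have h := (hasSum_one_div_mul_one_sub (x := 1 / 3) (by norm_num) (by norm_num)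
    (by norm_num)).mul_left (1 / 3)
  have hsub : (1 - 1 / 3 : ℝ) = 2 / 3 := by norm_num
  have hval : 1 / 3 * (π * Real.cot (π * (1 / 3)) / (1 - 2 * (1 / 3))) = π / √3 := by
    rw [mul_one_div π, cot_pi_div_three]
    ring
  rw [hval] at h
  simpa only [hsub, mul_one_div] using h

end Cotangent

lemma two_mul_wzCompanion_one_third (k : ℕ) :
    2 * wzCompanion (1 / 3) (2 / 3) 0 k =
      (1 / 4) ^ k * risingFactorial (1 / 3) k / risingFactorial (7 / 6) k *
        ((9 * k + 7) / ((k + 1) * (3 * k + 2))) := by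
  have hdup : risingFactorial (1 / 3 + 1) (2 * k) =
      4 ^ k * risingFactorial (2 / 3) k * risingFactorial (7 / 6) k := by
    convert risingFactorial_two_mul (1 / 3 + 1) k using 3 <;> norm_num
  have hc := risingFactorial_pos (a := 2 / 3) (by norm_num) k
  have hD := risingFactorial_pos (a := 7 / 6) (by norm_num) k
  have hparam : (1 + 1 / 3 - 2 / 3 : ℝ) = 2 / 3 := by norm_num
  simp only [wzCompanion, wzTerm, zero_add, Nat.cast_zero, hdup, hparam, one_div_pow]
  have hden : (2 * k + 1 / 3 + 1 : ℝ) = 2 * (k + 2 / 3) := by ring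
  rw [hden]
  field_simp
  ring

theorem stmt_9 :
    2 * Real.pi / Real.sqrt 3 =
      ∑' k : ℕ, (1/4 : ℝ) ^ k * (risingFactorial (1/3) k) /
        (risingFactorial (7/6) k) * ((9 * (k:ℝ) + 7) / (((k:ℝ) + 1) * (3 * (k:ℝ) + 2))) := by
  have h := (hasSum_wzCompanion (by norm_num) (by norm_num) (by norm_num)
    hasSum_one_third_div_mul).mul_left 2
  simp only [two_mul_wzCompanion_one_third] at h
  rw [h.tsum_eq, mul_div_assoc]
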